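/- arXiv:2307.09399 — 2 statements merged into one kernel-verified Lean document; each statement's English description precedes it below -/
import Mathlib

section
/- For every integer c ≥ 3 and every integer g with 1 ≤ g ≤ ⌊(c−1)/2⌋, one has t(c,g) + t_p(c,g) ≤ t(c,m) + t_p(c,m), where m := ⌊(c+2)/4⌋. (That is, the mode of the genus distribution of 2-bridge knots with crossing number c is ⌊(c+2)/4⌋.) -/
/-- `tKnot c g` is t(c,g), the number of words in the partially double counted set T(c)
representing 2-bridge knots of crossing number `c` and genus `g`, given by the explicit
formula t(c,g) = (-1)^(c-1) * Σ_{n=0}^{c-2g-1} (-1)^n * binom(n+2g-1, n), the sum being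
empty when c - 2g - 1 < 0, and t(c,0) = 0. -/
def tKnot (c g : ℕ) : ℤ :=
  if g = 0 then 0
  else (-1 : ℤ) ^ (c - 1) *
    ∑ n ∈ Finset.range (c - 2 * g), (-1 : ℤ) ^ n * (Nat.choose (n + 2 * g - 1) n)

/-- `tpKnot c g` is t_p(c,g), the number of words of palindromic type representing
2-bridge knots of crossing number `c` and genus `g`, given by the explicit formula
t_p(c,g) = (-1)^(c'-g-1) * Σ_{n=0}^{c'-g-1} (-1)^n * binom(n+g-1, n) with
c' = ⌊(c+1)/2⌋, the sum being empty when c' - g - 1 < 0, and t_p(c,0) = 0. -/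
def tpKnot (c g : ℕ) : ℤ :=
  if g = 0 then 0
  else (-1 : ℤ) ^ ((c + 1) / 2 - g - 1) *
    ∑ n ∈ Finset.range ((c + 1) / 2 - g), (-1 : ℤ) ^ n * (Nat.choose (n + g - 1) n)

/-!
Both counts are partial alternating sums down a column of Pascal's triangle,
`B n k = C(n-1, k) - C(n-2, k) + C(n-3, k) - ⋯`, namely `t(c, g) = B (c-1) (2g-1)` and
`t_p(c, g) = B (⌊(c+1)/2⌋-1) (g-1)`. The array `B` satisfies Pascal's rule, and each row rises up
to its middle, then falls. By Pascal's rule the increments of `B n` over two columns are increments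
of `B (n+1)` over one column, so both counts rise and fall too, and they change direction at the
same genus unless `c = 4m + 1`. In that case the step from `m` to `m + 1` lowers `t` by the Fine
number `F_{2m}` and raises `t_p` by `F_{m-1}`. Since `2 F_{n+1} + F_n` is the Catalan number
`C_{n+1}`, and Catalan numbers at least double from `n = 1` on, Fine numbers increase from `n = 1`
on and the drop of `t` prevails.
-/

open Finset

/-- The alternating column sum `C(n-1, k) - C(n-2, k) + ⋯ ± C(0, k)` over the first `n` rows of
Pascal's triangle, in terms of which both `tKnot` and `tpKnot` are expressed. -/
def altChooseSum (n k : ℕ) : ℤ :=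
  ∑ i ∈ range n, (-1) ^ (n + 1 + i) * (i.choose k : ℤ)

theorem altChooseSum_succ_left (n k : ℕ) :
    altChooseSum (n + 1) k = n.choose k - altChooseSum n k := by
  have last_sign : (-1 : ℤ) ^ (n + 1 + 1 + n) = 1 := Even.neg_one_pow ⟨n + 1, by ring⟩
  have flip_sign (i : ℕ) : (-1 : ℤ) ^ (n + 1 + 1 + i) = -(-1) ^ (n + 1 + i) := by ring
  rw [altChooseSum, sum_range_succ, last_sign]
  simp only [flip_sign, neg_mul, sum_neg_distrib, altChooseSum]
  ring

theorem altChooseSum_eq_zero_of_le {n k : ℕ} (h : n ≤ k) : altChooseSum n k = 0 :=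
  sum_eq_zero fun i hi ↦ by
    rw [Nat.choose_eq_zero_of_lt ((mem_range.mp hi).trans_le h), Nat.cast_zero, mul_zero]

theorem altChooseSum_zero_right (n : ℕ) : altChooseSum n 0 = n % 2 := by
  induction n with
  | zero => rfl
  | succ n ih =>
    rw [altChooseSum_succ_left, ih, Nat.choose_zero_right]
    lia

theorem altChooseSum_add_left (k m : ℕ) :
    altChooseSum (k + m) k =
      (-1) ^ (m + 1) * ∑ n ∈ range m, (-1) ^ n * ((n + k).choose n : ℤ) := by
  induction m with
  | zero => simp [altChooseSum_eq_zero_of_le]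
  | succ m ih =>
    have last_sign : (-1 : ℤ) ^ (m + 1 + 1) * (-1) ^ m = 1 := by
      rw [← pow_add]
      exact Even.neg_one_pow ⟨m + 1, by ring⟩
    rw [← add_assoc, altChooseSum_succ_left, ih, sum_range_succ, mul_add, ← mul_assoc _ ((-1) ^ m),
      last_sign, add_comm m k, ← Nat.choose_symm_add]
    ring

theorem altChooseSum_succ_succ (n k : ℕ) :
    altChooseSum (n + 1) (k + 1) = altChooseSum n (k + 1) + altChooseSum n k := by
  induction n with
  | zero => rfl
  | succ n ih =>
    have pascal : ((n + 1).choose (k + 1) : ℤ) = n.choose k + n.choose (k + 1) :=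
      mod_cast Nat.choose_succ_succ n k
    linarith [altChooseSum_succ_left (n + 1) (k + 1), altChooseSum_succ_left n (k + 1),
      altChooseSum_succ_left n k]

theorem two_mul_altChooseSum_succ_add (n k : ℕ) :
    2 * altChooseSum n (k + 1) + altChooseSum n k = n.choose (k + 1) := by
  linarith [altChooseSum_succ_left n (k + 1), altChooseSum_succ_succ n k]

theorem altChooseSum_add_two_succ (n k : ℕ) :
    altChooseSum (n + 2) (k + 1) = altChooseSum n (k + 1) + n.choose k := by
  linarith [altChooseSum_succ_succ (n + 1) k, altChooseSum_succ_succ n k,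
    altChooseSum_succ_left n k]

theorem altChooseSum_add_two_sub (n k : ℕ) :
    altChooseSum n (k + 2) - altChooseSum n k =
      altChooseSum (n + 1) (k + 2) - altChooseSum (n + 1) (k + 1) := by
  linarith [altChooseSum_succ_succ n k, altChooseSum_succ_succ n (k + 1)]

theorem choose_succ_le_choose {n k : ℕ} (h : n ≤ 2 * k + 1) : n.choose (k + 1) ≤ n.choose k := by
  refine Nat.le_of_mul_le_mul_right ?_ k.succ_pos
  rw [Nat.choose_succ_right_eq]
  exact Nat.mul_le_mul_left _ (by lia)

theorem altChooseSum_succ_le {n k : ℕ} (h : n ≤ 2 * k + 1) :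
    altChooseSum n (k + 1) ≤ altChooseSum n k := by
  induction n using Nat.twoStepInduction generalizing k with
  | zero => rfl
  | one =>
    rw [altChooseSum_eq_zero_of_le (Nat.le_add_left 1 k), altChooseSum_succ_left,
      altChooseSum_eq_zero_of_le k.zero_le, sub_zero]
    exact Nat.cast_nonneg _
  | more n ih _ =>
    obtain _ | k := k
    · lia
    · rw [altChooseSum_add_two_succ, altChooseSum_add_two_succ]
      exact add_le_add (ih (by lia)) (mod_cast choose_succ_le_choose (by lia))

/-- The `n`-th Fine number `1, 0, 1, 2, 6, 18, 57, …` (OEIS A000957, with the index shifted by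
one), encoded as the drop of `altChooseSum` just past the middle of an odd row. -/
def fineNumber (n : ℕ) : ℤ :=
  altChooseSum (2 * n + 1) n - altChooseSum (2 * n + 1) (n + 1)

theorem fineNumber_nonneg (n : ℕ) : 0 ≤ fineNumber n :=
  sub_nonneg.mpr (altChooseSum_succ_le le_rfl)

theorem altChooseSum_two_mul_add_two_sub (n : ℕ) :
    altChooseSum (2 * n + 2) (n + 1) - altChooseSum (2 * n + 2) n = fineNumber n := by
  rw [altChooseSum_succ_left, altChooseSum_succ_left (2 * n + 1) n, Nat.choose_symm_half,
    fineNumber]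
  ring

theorem altChooseSum_le_succ {n k : ℕ} (h : 2 * k + 2 ≤ n) :
    altChooseSum n k ≤ altChooseSum n (k + 1) := by
  induction k generalizing n with
  | zero =>
    have relation := two_mul_altChooseSum_succ_add n 0
    rw [altChooseSum_zero_right, zero_add, Nat.choose_one_right] at relation
    rw [altChooseSum_zero_right, zero_add]
    lia
  | succ k ih =>
    induction n, h using Nat.le_induction with
    | base => linarith [altChooseSum_two_mul_add_two_sub (k + 1), fineNumber_nonneg (k + 1)]
    | succ n hn ih_row =>
      rw [altChooseSum_succ_succ, altChooseSum_succ_succ]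
      exact add_le_add ih_row (ih (by lia))

theorem altChooseSum_add_two_le {n k : ℕ} (h : n ≤ 2 * k + 2) :
    altChooseSum n (k + 2) ≤ altChooseSum n k := by
  rw [← sub_nonpos, altChooseSum_add_two_sub, sub_nonpos]
  exact altChooseSum_succ_le (by lia)

theorem altChooseSum_le_add_two {n k : ℕ} (h : 2 * k + 3 ≤ n) :
    altChooseSum n k ≤ altChooseSum n (k + 2) := by
  rw [← sub_nonneg, altChooseSum_add_two_sub, sub_nonneg]
  exact altChooseSum_le_succ (by lia)

theorem catalan_succ_eq_choose_sub_choose (n : ℕ) :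
    (catalan (n + 1) : ℤ) = (2 * n + 1).choose (n + 1) - (2 * n + 1).choose (n + 2) := by
  have central : (n + 2) * catalan (n + 1) = 2 * (2 * n + 1).choose (n + 1) := by
    rw [succ_mul_catalan_eq_centralBinom, Nat.centralBinom, Nat.mul_succ, Nat.choose_succ_succ,
      Nat.choose_symm_half]
    ring
  have next : (2 * n + 1).choose (n + 2) * (n + 2) = (2 * n + 1).choose (n + 1) * n := by
    rw [Nat.choose_succ_right_eq, show 2 * n + 1 - (n + 1) = n by lia]
  zify at central next
  refine mul_left_cancel₀ (show (n + 2 : ℤ) ≠ 0 by positivity) ?_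
  linear_combination central + next

theorem two_mul_catalan_le_catalan_succ {n : ℕ} (hn : 1 ≤ n) :
    2 * catalan n ≤ catalan (n + 1) := by
  have ratio : (n + 2) * catalan (n + 1) = 2 * (2 * n + 1) * catalan n := by
    refine Nat.eq_of_mul_eq_mul_left n.succ_pos ?_
    calc (n + 1) * ((n + 2) * catalan (n + 1))
        = (n + 1) * (n + 1).centralBinom := by rw [← succ_mul_catalan_eq_centralBinom]
      _ = 2 * (2 * n + 1) * n.centralBinom := Nat.succ_mul_centralBinom_succ n
      _ = (n + 1) * (2 * (2 * n + 1) * catalan n) := by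
        rw [← succ_mul_catalan_eq_centralBinom]
        ring
  nlinarith

theorem two_mul_fineNumber_succ_add (n : ℕ) :
    2 * fineNumber (n + 1) + fineNumber n = catalan (n + 1) := by
  have fineNumber_succ : fineNumber (n + 1) =
      altChooseSum (2 * n + 1) (n + 1) - altChooseSum (2 * n + 1) (n + 2) := by
    rw [fineNumber, show 2 * (n + 1) + 1 = 2 * n + 1 + 2 by ring, altChooseSum_add_two_succ,
      altChooseSum_add_two_succ, Nat.choose_symm_half]
    ring
  rw [catalan_succ_eq_choose_sub_choose, fineNumber_succ, fineNumber]
  linarith [two_mul_altChooseSum_succ_add (2 * n + 1) n,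
    two_mul_altChooseSum_succ_add (2 * n + 1) (n + 1)]

theorem monotoneOn_fineNumber : MonotoneOn fineNumber (Set.Ici 1) := by
  refine monotoneOn_of_le_add_one Set.ordConnected_Ici fun n _ hn _ ↦ ?_
  obtain ⟨n, rfl⟩ := Nat.exists_eq_add_of_le' hn
  have catalan_double : (2 * catalan (n + 1) : ℤ) ≤ catalan (n + 2) :=
    mod_cast two_mul_catalan_le_catalan_succ hn
  linarith [two_mul_fineNumber_succ_add n, two_mul_fineNumber_succ_add (n + 1),
    fineNumber_nonneg n, fineNumber_nonneg (n + 1)]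

theorem fineNumber_le_fineNumber_two_mul_add_two (n : ℕ) :
    fineNumber n ≤ fineNumber (2 * n + 2) := by
  obtain rfl | hn := n.eq_zero_or_pos
  · decide
  · exact monotoneOn_fineNumber hn (Set.mem_Ici.mpr (by lia)) (by lia)

theorem tKnot_succ (c g : ℕ) : tKnot c (g + 1) = altChooseSum (c - 1) (2 * g + 1) := by
  rw [tKnot, if_neg g.succ_ne_zero]
  obtain h | h := le_total (c - 1) (2 * g + 1)
  · rw [altChooseSum_eq_zero_of_le h, show c - 2 * (g + 1) = 0 by lia, sum_range_zero, mul_zero]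
  · obtain ⟨m, hm⟩ := Nat.exists_eq_add_of_le h
    rw [hm, altChooseSum_add_left, show c - 2 * (g + 1) = m by lia,
      show 2 * g + 1 + m = 2 * g + (m + 1) by ring, pow_add, Even.neg_one_pow (even_two_mul g),
      one_mul]
    rfl

theorem tpKnot_succ (c g : ℕ) : tpKnot c (g + 1) = altChooseSum ((c + 1) / 2 - 1) g := by
  rw [tpKnot, if_neg g.succ_ne_zero]
  obtain h | h := le_or_gt ((c + 1) / 2 - 1) g
  · rw [altChooseSum_eq_zero_of_le h, show (c + 1) / 2 - (g + 1) = 0 by lia, sum_range_zero,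
      mul_zero]
  · obtain ⟨m, hm⟩ := Nat.exists_eq_add_of_lt h
    rw [hm, add_assoc, altChooseSum_add_left, show (c + 1) / 2 - (g + 1) = m + 1 by lia,
      Nat.add_sub_cancel, pow_add _ m 2, neg_one_sq, mul_one]
    rfl

theorem tKnot_add_tpKnot_le_succ {c g : ℕ} (h : g + 2 ≤ (c + 2) / 4) :
    tKnot c (g + 1) + tpKnot c (g + 1) ≤ tKnot c (g + 2) + tpKnot c (g + 2) := by
  simp only [tKnot_succ, tpKnot_succ]
  exact add_le_add (altChooseSum_le_add_two (by lia)) (altChooseSum_le_succ (by lia))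

theorem tKnot_add_tpKnot_succ_le {c g : ℕ} (h : (c + 2) / 4 ≤ g + 1) :
    tKnot c (g + 2) + tpKnot c (g + 2) ≤ tKnot c (g + 1) + tpKnot c (g + 1) := by
  simp only [tKnot_succ, tpKnot_succ]
  obtain rfl | hc := eq_or_ne c (4 * g + 5)
  · rw [show 4 * g + 5 - 1 = 4 * g + 4 by lia, show (4 * g + 5 + 1) / 2 - 1 = 2 * g + 2 by lia]
    have t_drop : altChooseSum (4 * g + 4) (2 * g + 1) - altChooseSum (4 * g + 4) (2 * g + 3) =
        fineNumber (2 * g + 2) := by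
      rw [← neg_sub, altChooseSum_add_two_sub, neg_sub, fineNumber]
      ring_nf
    have tp_rise := altChooseSum_two_mul_add_two_sub g
    rw [show 2 * (g + 1) + 1 = 2 * g + 3 by ring]
    linarith [fineNumber_le_fineNumber_two_mul_add_two g]
  · exact add_le_add (altChooseSum_add_two_le (by lia)) (altChooseSum_succ_le (by lia))

theorem monotoneOn_tKnot_add_tpKnot (c : ℕ) :
    MonotoneOn (fun g ↦ tKnot c g + tpKnot c g) (Set.Icc 1 ((c + 2) / 4)) := by
  refine monotoneOn_of_le_add_one Set.ordConnected_Icc fun g _ hg hg_succ ↦ ?_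
  obtain ⟨g, rfl⟩ := Nat.exists_eq_add_of_le' hg.1
  exact tKnot_add_tpKnot_le_succ hg_succ.2

theorem antitoneOn_tKnot_add_tpKnot (c : ℕ) :
    AntitoneOn (fun g ↦ tKnot c g + tpKnot c g) (Set.Ici 1 ∩ Set.Ici ((c + 2) / 4)) := by
  refine antitoneOn_of_add_one_le (Set.ordConnected_Ici.inter Set.ordConnected_Ici)
    fun g _ hg _ ↦ ?_
  obtain ⟨g, rfl⟩ := Nat.exists_eq_add_of_le' hg.1
  exact tKnot_add_tpKnot_succ_le hg.2

/-- For every c ≥ 3 and every g with 1 ≤ g ≤ ⌊(c−1)/2⌋,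
t(c,g) + t_p(c,g) ≤ t(c,m) + t_p(c,m) where m = ⌊(c+2)/4⌋;
that is, the mode of the genus distribution of 2-bridge knots with
crossing number c is ⌊(c+2)/4⌋. -/
theorem genus_mode (c g : ℕ) (hc : 3 ≤ c) (hg : 1 ≤ g) (hg' : g ≤ (c - 1) / 2) :
    tKnot c g + tpKnot c g ≤ tKnot c ((c + 2) / 4) + tpKnot c ((c + 2) / 4) := by
  rcases le_total g ((c + 2) / 4) with h | h
  · exact monotoneOn_tKnot_add_tpKnot c ⟨hg, h⟩ ⟨hg.trans h, le_rfl⟩ h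
  · have one_le_mode : 1 ≤ (c + 2) / 4 := by lia
    exact antitoneOn_tKnot_add_tpKnot c ⟨one_le_mode, Set.self_mem_Ici⟩ ⟨hg, h⟩ h
end

section
/- Define, for each integer c ≥ 3, the real numbers E(c) := (g(c) + g_p(c)) / (t(c) + t_p(c)) and Var(c) := (g2(c) + g2_p(c)) / (t(c) + t_p(c)) − E(c)². Then the sequence Var(c) − c/16 + 17/144 tends to 0 as c → ∞. (That is, the variance of the genus of a uniformly random 2-bridge knot with crossing number c approaches c/16 − 17/144 as c → ∞.) -/
/-- `genusMean c` is E(c) = (g(c) + g_p(c)) / (t(c) + t_p(c)), the mean genus of a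
uniformly random 2-bridge knot with crossing number c. -/
noncomputable def genusMean (c : ℕ) : ℝ :=
  ((∑ i ∈ Finset.Icc 1 ((c - 1) / 2), (i : ℤ) * tKnot c i
      + ∑ i ∈ Finset.Icc 1 ((c - 1) / 2), (i : ℤ) * tpKnot c i : ℤ) : ℝ) /
  ((∑ g ∈ Finset.Icc 1 ((c - 1) / 2), tKnot c g
      + ∑ g ∈ Finset.Icc 1 ((c - 1) / 2), tpKnot c g : ℤ) : ℝ)

/-- `genusVariance c` is Var(c) = (g²(c) + g²_p(c)) / (t(c) + t_p(c)) − E(c)², the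
variance of the genus of a uniformly random 2-bridge knot with crossing number c. -/
noncomputable def genusVariance (c : ℕ) : ℝ :=
  ((∑ i ∈ Finset.Icc 1 ((c - 1) / 2), (i : ℤ) ^ 2 * tKnot c i
      + ∑ i ∈ Finset.Icc 1 ((c - 1) / 2), (i : ℤ) ^ 2 * tpKnot c i : ℤ) : ℝ) /
  ((∑ g ∈ Finset.Icc 1 ((c - 1) / 2), tKnot c g
      + ∑ g ∈ Finset.Icc 1 ((c - 1) / 2), tpKnot c g : ℤ) : ℝ) - (genusMean c) ^ 2

/-!
Pascal's rule turns the alternating sum defining `tKnot` into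
`tKnot (m + 2) (j + 1) + tKnot (m + 1) (j + 1) = m.choose (2 * j + 1)`, so the moments
`M k c = Σ_g g ^ k * tKnot c g` satisfy
`M k (m + 2) + M k (m + 1) = Σ_j (j + 1) ^ k * m.choose (2 * j + 1)`.
Expanding the weight in binomial coefficients of `2 * j + 1` and evaluating derivatives of
`(1 + x) ^ m` at `x = 1` and `x = -1`, the right-hand side is `2 ^ m` times a polynomial in `m`.
The recurrence then has a solution `2 ^ c * p k c` with `p k` a polynomial, and its homogeneous
solutions are multiples of `(-1) ^ c`, so `M k c / 2 ^ c` is exponentially close to `p k c`. The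
moments of `tpKnot` are at most `c ^ k * 2 ^ (c / 2)` and therefore do not contribute. Dividing and
squaring preserve errors smaller than every power of `c`, and the polynomial parts combine to
`c / 16 - 17 / 144`.
-/

open Finset Filter Asymptotics Polynomial

section BinomialSums

theorem sum_range_choose_mul_choose_mul_pow {R : Type*} [CommSemiring R] (x : R) {r m N : ℕ}
    (hr : r ≤ m) (hN : m < N) :
    ∑ i ∈ range N, (i.choose r : R) * m.choose i * x ^ i =
      m.choose r * x ^ r * (1 + x) ^ (m - r) := by
  obtain ⟨d, rfl⟩ := Nat.exists_eq_add_of_le hr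
  have choose_mul_choose (l : ℕ) :
      (r + l).choose r * (r + d).choose (r + l) = (r + d).choose r * d.choose l := by
    rw [mul_comm, Nat.choose_mul (Nat.le_add_right r l), Nat.add_sub_cancel_left,
      Nat.add_sub_cancel_left]
  have sum_below : ∑ i ∈ range r, (i.choose r : R) * (r + d).choose i * x ^ i = 0 :=
    sum_eq_zero fun i hi => by simp [Nat.choose_eq_zero_of_lt (mem_range.1 hi)]
  calc ∑ i ∈ range N, (i.choose r : R) * (r + d).choose i * x ^ i
      = ∑ i ∈ range (r + (d + 1)), (i.choose r : R) * (r + d).choose i * x ^ i :=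
        eventually_constant_sum (fun i (hi : r + d < i) => by
          simp [Nat.choose_eq_zero_of_lt hi]) hN
    _ = ∑ l ∈ range (d + 1), ((r + l).choose r : R) * (r + d).choose (r + l) * x ^ (r + l) := by
        rw [sum_range_add, sum_below, zero_add]
    _ = ∑ l ∈ range (d + 1), (r + d).choose r * x ^ r * (x ^ l * d.choose l) :=
        sum_congr rfl fun l _ => by
          rw [← Nat.cast_mul, choose_mul_choose, Nat.cast_mul, pow_add]
          ring
    _ = (r + d).choose r * x ^ r * (1 + x) ^ (r + d - r) := by
        simp [← mul_sum, add_comm 1 x, add_pow]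

theorem two_mul_sum_range_odd {R : Type*} [CommRing R] (f : ℕ → R) (N : ℕ) :
    2 * ∑ j ∈ range N, f (2 * j + 1) =
      ∑ i ∈ range (2 * N), f i - ∑ i ∈ range (2 * N), f i * (-1) ^ i := by
  induction N with
  | zero => simp
  | succ N ih =>
    simp only [Nat.mul_succ, sum_range_succ, mul_add, ih, pow_succ,
      Even.neg_one_pow (even_two_mul N)]
    ring

variable {K : Type*} [Field K] [CharZero K]

theorem sum_range_choose_mul_choose_odd {r m N : ℕ} (hr : r < m) (hN : m < 2 * N) :
    ∑ j ∈ range N, ((2 * j + 1).choose r : K) * m.choose (2 * j + 1) =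
      m.choose r * 2 ^ (m - 1 - r) := by
  have total := sum_range_choose_mul_choose_mul_pow (1 : K) hr.le hN
  have alternating := sum_range_choose_mul_choose_mul_pow (-1 : K) hr.le hN
  have split := two_mul_sum_range_odd (fun i => (i.choose r : K) * m.choose i) N
  obtain ⟨d, rfl⟩ := Nat.exists_eq_add_of_lt hr
  rw [show r + d + 1 - r = d + 1 by omega] at total alternating
  rw [show r + d + 1 - 1 - r = d by omega]
  simp only [one_pow, mul_one, add_neg_cancel, zero_pow d.succ_ne_zero, mul_zero]
    at total alternating
  rw [total, alternating, one_add_one_eq_two, pow_succ] at split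
  linear_combination split / 2

theorem sum_range_choose_odd {m N : ℕ} (hm : 0 < m) (hN : m < 2 * N) :
    ∑ j ∈ range N, (m.choose (2 * j + 1) : K) = 2 ^ (m - 1) := by
  simpa using sum_range_choose_mul_choose_odd (K := K) hm hN

theorem sum_range_succ_mul_choose_odd {m N : ℕ} (hm : 1 < m) (hN : m < 2 * N) :
    ∑ j ∈ range N, ((j : K) + 1) * m.choose (2 * j + 1) = ((m : K) + 2) * 2 ^ (m - 2) / 2 := by
  have zeroth := sum_range_choose_odd (K := K) (by omega) hN
  have first := sum_range_choose_mul_choose_odd (K := K) hm hN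
  obtain ⟨d, rfl⟩ : ∃ d, m = d + 2 := Nat.exists_eq_add_of_le' hm
  calc ∑ j ∈ range N, ((j : K) + 1) * (d + 2).choose (2 * j + 1)
      = (∑ j ∈ range N, ((2 * j + 1).choose 1 : K) * (d + 2).choose (2 * j + 1) +
          ∑ j ∈ range N, ((d + 2).choose (2 * j + 1) : K)) / 2 := by
        rw [← sum_add_distrib, sum_div]
        refine sum_congr rfl fun j _ => ?_
        push_cast [Nat.choose_one_right]
        ring
    _ = _ := by
        rw [zeroth, first]
        simp only [Nat.choose_one_right, Nat.add_sub_cancel, Nat.add_succ_sub_one, pow_succ]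
        push_cast
        ring

theorem sum_range_succ_sq_mul_choose_odd {m N : ℕ} (hm : 2 < m) (hN : m < 2 * N) :
    ∑ j ∈ range N, ((j : K) + 1) ^ 2 * m.choose (2 * j + 1) =
      ((m : K) + 1) * (m + 4) * 2 ^ (m - 3) / 4 := by
  have zeroth := sum_range_choose_odd (K := K) (by omega) hN
  have first := sum_range_choose_mul_choose_odd (K := K) (r := 1) (by omega) hN
  have second := sum_range_choose_mul_choose_odd (K := K) hm hN
  obtain ⟨d, rfl⟩ : ∃ d, m = d + 3 := Nat.exists_eq_add_of_le' hm
  calc ∑ j ∈ range N, ((j : K) + 1) ^ 2 * (d + 3).choose (2 * j + 1)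
      = (2 * ∑ j ∈ range N, ((2 * j + 1).choose 2 : K) * (d + 3).choose (2 * j + 1) +
          3 * ∑ j ∈ range N, ((2 * j + 1).choose 1 : K) * (d + 3).choose (2 * j + 1) +
          ∑ j ∈ range N, ((d + 3).choose (2 * j + 1) : K)) / 4 := by
        rw [mul_sum, mul_sum, ← sum_add_distrib, ← sum_add_distrib, sum_div]
        refine sum_congr rfl fun j _ => ?_
        push_cast [Nat.choose_one_right, Nat.cast_choose_two]
        ring
    _ = _ := by
        rw [zeroth, first, second]
        simp only [Nat.choose_one_right, Nat.cast_choose_two, Nat.add_sub_cancel,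
          Nat.add_succ_sub_one, pow_succ]
        push_cast
        ring

end BinomialSums

section AsymptoticPolynomials

/-- The sequence `f` agrees with the polynomial `p` up to an error which decays faster than every
power of `n`. Unlike `o(1)`, this error class absorbs polynomial factors, so it is compatible with
products and quotients of the moments of the genus. -/
def PolyAsymptotic (f : ℕ → ℝ) (p : ℝ[X]) : Prop :=
  SuperpolynomialDecay atTop (fun n : ℕ => (n : ℝ)) fun n => f n - p.eval (n : ℝ)

variable {f g : ℕ → ℝ} {p q : ℝ[X]}

namespace PolyAsymptotic

theorem tendsto_sub (hf : PolyAsymptotic f p) :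
    Tendsto (fun n => f n - p.eval (n : ℝ)) atTop (nhds 0) := by
  simpa using hf 0

theorem add (hf : PolyAsymptotic f p) (hg : PolyAsymptotic g q) :
    PolyAsymptotic (fun n => f n + g n) (p + q) :=
  (SuperpolynomialDecay.add hf hg).congr fun n => by
    simp only [Pi.add_apply, eval_add]
    ring

theorem mul (hf : PolyAsymptotic f p) (hg : PolyAsymptotic g q) :
    PolyAsymptotic (fun n => f n * g n) (p * q) :=
  (((SuperpolynomialDecay.mul hf hg).add (hg.polynomial_mul p)).add (hf.polynomial_mul q)).congr
    fun n => by
      simp only [Pi.add_apply, Pi.mul_apply, eval_mul]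
      ring

theorem neg (hf : PolyAsymptotic f p) : PolyAsymptotic (fun n => -f n) (-p) :=
  (hf.const_mul (-1)).congr fun n => by
    simp only [eval_neg]
    ring

theorem sub (hf : PolyAsymptotic f p) (hg : PolyAsymptotic g q) :
    PolyAsymptotic (fun n => f n - g n) (p - q) := by
  simpa only [sub_eq_add_neg] using hf.add hg.neg

theorem inv {a : ℝ} (ha : a ≠ 0) (hf : PolyAsymptotic f (C a)) :
    PolyAsymptotic (fun n => (f n)⁻¹) (C a⁻¹) := by
  have f_tendsto : Tendsto f atTop (nhds a) := by
    simpa using hf.tendsto_sub.add_const a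
  have factor_tendsto : Tendsto (fun n => -(f n * a)⁻¹) atTop (nhds (-(a * a)⁻¹)) :=
    ((f_tendsto.mul_const a).inv₀ (mul_ne_zero ha ha)).neg
  refine fun k => Tendsto.congr' ?_ (by simpa using (hf k).mul factor_tendsto)
  filter_upwards [f_tendsto.eventually_ne ha] with n hn
  simp only [eval_C]
  field_simp
  ring

theorem div {a : ℝ} (ha : a ≠ 0) (hf : PolyAsymptotic f (C a * p))
    (hg : PolyAsymptotic g (C a)) : PolyAsymptotic (fun n => f n / g n) p := by
  have cancel : C a * p * C a⁻¹ = p := by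
    rw [mul_right_comm, ← C_mul, mul_inv_cancel₀ ha, C_1, one_mul]
  simpa only [div_eq_mul_inv, cancel] using hf.mul (hg.inv ha)

end PolyAsymptotic

theorem superpolynomialDecay_const_pow {r : ℝ} (hr : |r| < 1) :
    SuperpolynomialDecay atTop (fun n : ℕ => (n : ℝ)) fun n => r ^ n :=
  fun k => tendsto_pow_const_mul_const_pow_of_abs_lt_one k hr

theorem abs_sub_eq_of_add_succ_eq {G : Type*} [AddCommGroup G] [Lattice G] {u v : ℕ → G} {N n : ℕ}
    (h : ∀ n ≥ N, u (n + 1) + u n = v (n + 1) + v n) (hn : N ≤ n) :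
    |u n - v n| = |u N - v N| := by
  induction n, hn using Nat.le_induction with
  | base => rfl
  | succ n hn ih =>
    have flip_sign : u (n + 1) - v (n + 1) = v n - u n := by
      rw [sub_eq_sub_iff_add_eq_add, h n hn, add_comm]
    rw [flip_sign, abs_sub_comm, ih]

theorem polyAsymptotic_of_add_succ_eq {b : ℝ} (hb : 1 < b) {N : ℕ}
    (h : ∀ n ≥ N, f (n + 1) + f n = b ^ n * (b * p.eval ((n : ℝ) + 1) + p.eval (n : ℝ))) :
    PolyAsymptotic (fun n => f n / b ^ n) p := by
  have b_pos : 0 < b := one_pos.trans hb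
  set K := |f N - b ^ N * p.eval (N : ℝ)|
  have bound : ∀ n ≥ N, |f n - b ^ n * p.eval (n : ℝ)| = K := fun n hn =>
    abs_sub_eq_of_add_succ_eq (v := fun n => b ^ n * p.eval (n : ℝ))
      (fun n hn => by
        rw [h n hn]
        push_cast
        ring) hn
  have decay : SuperpolynomialDecay atTop (fun n : ℕ => (n : ℝ)) fun n => K * b⁻¹ ^ n :=
    (superpolynomialDecay_const_pow (by
      rw [abs_of_pos (inv_pos.2 b_pos)]
      exact inv_lt_one_of_one_lt₀ hb)).const_mul K
  refine decay.trans_eventually_abs_le ?_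
  filter_upwards [eventually_ge_atTop N] with n hn
  have scaled : f n / b ^ n - p.eval (n : ℝ) = (f n - b ^ n * p.eval (n : ℝ)) * b⁻¹ ^ n := by
    rw [inv_pow]
    field_simp
  rw [Function.comp_apply, Function.comp_apply, scaled, abs_mul, abs_mul, bound n hn, abs_abs]

end AsymptoticPolynomials

/-- The `k`-th moment `Σ_i i ^ k * w c i` of a family `w` of weights indexed by crossing number and
genus. With `w = tKnot` and `k = 0, 1, 2` this is t(c), g(c), g2(c); with `w = tpKnot` it is
t_p(c), g_p(c), g2_p(c). -/
noncomputable def genusMoment (w : ℕ → ℕ → ℤ) (k c : ℕ) : ℝ :=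
  ∑ i ∈ Icc 1 ((c - 1) / 2), (i : ℝ) ^ k * w c i

section KnotMoments

theorem tKnot_eq_zero_of_le {c g : ℕ} (h : c ≤ 2 * g) : tKnot c g = 0 := by
  simp [tKnot, Nat.sub_eq_zero_of_le h]

theorem tKnot_add_tKnot (m j : ℕ) :
    tKnot (m + 2) (j + 1) + tKnot (m + 1) (j + 1) = m.choose (2 * j + 1) := by
  obtain hlt | hle := Nat.lt_or_ge m (2 * j + 1)
  · rw [tKnot_eq_zero_of_le (by omega), tKnot_eq_zero_of_le (by omega),
      Nat.choose_eq_zero_of_lt hlt, Nat.cast_zero, add_zero]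
  · obtain ⟨d, rfl⟩ := Nat.exists_eq_add_of_le hle
    have sign : (-1 : ℤ) ^ (2 * j + 1 + d + 1) * (-1) ^ d = 1 := by
      rw [← pow_add, show 2 * j + 1 + d + 1 + d = 2 * (j + d + 1) by ring, pow_mul, neg_one_sq,
        one_pow]
    simp only [tKnot, Nat.add_eq_zero_iff, one_ne_zero, and_false, if_false]
    rw [show 2 * j + 1 + d + 2 - 2 * (j + 1) = d + 1 by omega,
      show 2 * j + 1 + d + 1 - 2 * (j + 1) = d by omega,
      show 2 * j + 1 + d + 2 - 1 = 2 * j + 1 + d + 1 by omega, Nat.add_sub_cancel,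
      sum_range_succ, show d + 2 * (j + 1) - 1 = 2 * j + 1 + d by omega,
      Nat.choose_symm_add (a := 2 * j + 1) (b := d)]
    linear_combination ((2 * j + 1 + d).choose d : ℤ) * sign

theorem genusMoment_tKnot_eq_sum_range (k : ℕ) {c N : ℕ} (hN : c ≤ 2 * N + 2) :
    genusMoment tKnot k c = ∑ j ∈ range N, ((j : ℝ) + 1) ^ k * tKnot c (j + 1) := by
  rw [eventually_constant_sum (N := (c - 1) / 2)
    (fun j hj => by rw [tKnot_eq_zero_of_le (by omega), Int.cast_zero, mul_zero]) (by omega)]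
  simp only [genusMoment, ← Ico_add_one_right_eq_Icc, sum_Ico_eq_sum_range, Nat.add_sub_cancel,
    Nat.cast_add, Nat.cast_one, add_comm 1]

theorem genusMoment_tKnot_add (k m : ℕ) :
    genusMoment tKnot k (m + 2) + genusMoment tKnot k (m + 1) =
      ∑ j ∈ range (m + 1), ((j : ℝ) + 1) ^ k * m.choose (2 * j + 1) := by
  rw [genusMoment_tKnot_eq_sum_range k (N := m + 1) (by omega),
    genusMoment_tKnot_eq_sum_range k (N := m + 1) (by omega), ← sum_add_distrib]
  refine sum_congr rfl fun j _ => ?_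
  rw [← mul_add]
  exact_mod_cast congrArg (fun z : ℤ => ((j : ℝ) + 1) ^ k * z) (tKnot_add_tKnot m j)

theorem polyAsymptotic_genusMoment_tKnot_zero :
    PolyAsymptotic (fun c => genusMoment tKnot 0 c / 2 ^ c) (C (1 / 12)) := by
  refine polyAsymptotic_of_add_succ_eq (N := 2) one_lt_two fun c hc => ?_
  obtain ⟨n, rfl⟩ := Nat.exists_eq_add_of_le' hc
  rw [genusMoment_tKnot_add]
  simp only [pow_zero, one_mul]
  rw [sum_range_choose_odd (by omega) (by omega)]
  simp only [eval_C, Nat.add_sub_cancel]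
  ring

theorem polyAsymptotic_genusMoment_tKnot_one :
    PolyAsymptotic (fun c => genusMoment tKnot 1 c / 2 ^ c)
      (C (1 / 12) * (C (1 / 4) * X + C (1 / 12))) := by
  refine polyAsymptotic_of_add_succ_eq (N := 3) one_lt_two fun c hc => ?_
  obtain ⟨n, rfl⟩ := Nat.exists_eq_add_of_le' hc
  rw [genusMoment_tKnot_add]
  simp only [pow_one]
  rw [sum_range_succ_mul_choose_odd (by omega) (by omega)]
  simp only [eval_add, eval_mul, eval_C, eval_X, Nat.add_sub_cancel]
  push_cast
  ring

theorem polyAsymptotic_genusMoment_tKnot_two :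
    PolyAsymptotic (fun c => genusMoment tKnot 2 c / 2 ^ c)
      (C (1 / 12) * (C (1 / 16) * X ^ 2 + C (5 / 48) * X - C (1 / 9))) := by
  refine polyAsymptotic_of_add_succ_eq (N := 4) one_lt_two fun c hc => ?_
  obtain ⟨n, rfl⟩ := Nat.exists_eq_add_of_le' hc
  rw [genusMoment_tKnot_add, sum_range_succ_sq_mul_choose_odd (by omega) (by omega)]
  simp only [eval_add, eval_sub, eval_mul, eval_pow, eval_C, eval_X, Nat.add_sub_cancel]
  push_cast
  ring

theorem abs_tpKnot_le_choose (c g : ℕ) : |tpKnot c g| ≤ ((c - 1) / 2).choose g := by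
  obtain rfl | ⟨h, rfl⟩ : g = 0 ∨ ∃ h, g = h + 1 := by cases g <;> simp
  · simp [tpKnot]
  obtain hle | hlt := le_or_gt ((c + 1) / 2) (h + 1)
  · simp [tpKnot, Nat.sub_eq_zero_of_le hle]
  obtain ⟨n, hn⟩ := Nat.exists_eq_add_of_lt hlt
  have hockey_stick : ∑ i ∈ range (n + 1), (i + h).choose i = ((c - 1) / 2).choose (h + 1) := by
    simp only [Nat.choose_symm_add, Nat.sum_range_add_choose]
    congr 1
    omega
  simp only [tpKnot, h.succ_ne_zero, if_false, abs_mul, abs_neg_one_pow, one_mul,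
    show (c + 1) / 2 - (h + 1) = n + 1 by omega, ← add_assoc, Nat.add_sub_cancel]
  rw [← hockey_stick, Nat.cast_sum]
  exact (abs_sum_le_sum_abs _ _).trans_eq (sum_congr rfl fun i _ => by simp [abs_mul])

theorem abs_genusMoment_tpKnot_le (k c : ℕ) :
    |genusMoment tpKnot k c| ≤ (c : ℝ) ^ k * 2 ^ ((c - 1) / 2) := by
  set h := (c - 1) / 2
  calc |genusMoment tpKnot k c|
      ≤ ∑ i ∈ Icc 1 h, |(i : ℝ) ^ k * tpKnot c i| := abs_sum_le_sum_abs _ _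
    _ ≤ ∑ i ∈ Icc 1 h, (c : ℝ) ^ k * h.choose i := by
        refine sum_le_sum fun i hi => ?_
        have i_le : i ≤ c := (mem_Icc.1 hi).2.trans (by omega)
        rw [abs_mul, abs_pow, Nat.abs_cast]
        gcongr
        exact_mod_cast abs_tpKnot_le_choose c i
    _ ≤ ∑ i ∈ range (h + 1), (c : ℝ) ^ k * h.choose i :=
        sum_le_sum_of_subset_of_nonneg
          (fun i hi => mem_range.2 (Nat.lt_succ_of_le (mem_Icc.1 hi).2))
          fun _ _ _ => by positivity
    _ = (c : ℝ) ^ k * 2 ^ h := by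
        rw [← mul_sum]
        exact_mod_cast congrArg (c ^ k * ·) (Nat.sum_range_choose h)

theorem polyAsymptotic_genusMoment_tpKnot (k : ℕ) :
    PolyAsymptotic (fun c => genusMoment tpKnot k c / 2 ^ c) 0 := by
  have decay : SuperpolynomialDecay atTop (fun c : ℕ => (c : ℝ))
      fun c => (c : ℝ) ^ k * (3 / 4 : ℝ) ^ c :=
    (superpolynomialDecay_const_pow (by norm_num [abs_of_pos])).param_pow_mul k
  refine decay.trans_abs_le fun c => ?_
  have two_pow_half_le : (2 : ℝ) ^ ((c - 1) / 2) ≤ (3 / 2) ^ c :=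
    calc (2 : ℝ) ^ ((c - 1) / 2) ≤ ((3 / 2) ^ 2) ^ ((c - 1) / 2) := by gcongr; norm_num
      _ = (3 / 2) ^ (2 * ((c - 1) / 2)) := (pow_mul _ _ _).symm
      _ ≤ (3 / 2) ^ c := pow_le_pow_right₀ (by norm_num) (by omega)
  calc |genusMoment tpKnot k c / 2 ^ c - eval (c : ℝ) 0|
      = |genusMoment tpKnot k c| / 2 ^ c := by
        rw [eval_zero, sub_zero, abs_div, abs_of_pos (by positivity : (0 : ℝ) < 2 ^ c)]
    _ ≤ (c : ℝ) ^ k * (3 / 2) ^ c / 2 ^ c := by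
        gcongr
        exact (abs_genusMoment_tpKnot_le k c).trans (by gcongr)
    _ = (c : ℝ) ^ k * (3 / 4) ^ c := by
        rw [mul_div_assoc, ← div_pow]
        norm_num
    _ ≤ |(c : ℝ) ^ k * (3 / 4) ^ c| := le_abs_self _

theorem polyAsymptotic_genusMoment_tKnot_add_tpKnot {k : ℕ} {p : ℝ[X]}
    (h : PolyAsymptotic (fun c => genusMoment tKnot k c / 2 ^ c) p) :
    PolyAsymptotic (fun c => (genusMoment tKnot k c + genusMoment tpKnot k c) / 2 ^ c) p := by
  simpa only [add_div, add_zero] using h.add (polyAsymptotic_genusMoment_tpKnot k)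

end KnotMoments

theorem polyAsymptotic_genusMoment_div {k : ℕ} {p : ℝ[X]}
    (h : PolyAsymptotic (fun c => genusMoment tKnot k c / 2 ^ c) (C (1 / 12) * p)) :
    PolyAsymptotic (fun c => (genusMoment tKnot k c + genusMoment tpKnot k c) /
      (genusMoment tKnot 0 c + genusMoment tpKnot 0 c)) p := by
  have two_pow_ne_zero (c : ℕ) : (2 : ℝ) ^ c ≠ 0 := by positivity
  simpa only [div_div_div_cancel_right₀ (two_pow_ne_zero _)] using
    (polyAsymptotic_genusMoment_tKnot_add_tpKnot h).div (by norm_num)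
      (polyAsymptotic_genusMoment_tKnot_add_tpKnot polyAsymptotic_genusMoment_tKnot_zero)

theorem genusMean_eq (c : ℕ) :
    genusMean c = (genusMoment tKnot 1 c + genusMoment tpKnot 1 c) /
      (genusMoment tKnot 0 c + genusMoment tpKnot 0 c) := by
  simp [genusMean, genusMoment]

theorem genusVariance_eq (c : ℕ) :
    genusVariance c = (genusMoment tKnot 2 c + genusMoment tpKnot 2 c) /
      (genusMoment tKnot 0 c + genusMoment tpKnot 0 c) - genusMean c * genusMean c := by
  simp [genusVariance, genusMoment, sq (genusMean c)]

theorem polyAsymptotic_genusMean : PolyAsymptotic genusMean (C (1 / 4) * X + C (1 / 12)) := by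
  simpa only [← genusMean_eq] using
    polyAsymptotic_genusMoment_div polyAsymptotic_genusMoment_tKnot_one

theorem polyAsymptotic_genusVariance :
    PolyAsymptotic genusVariance (C (1 / 16) * X - C (17 / 144)) := by
  have second_moment := polyAsymptotic_genusMoment_div polyAsymptotic_genusMoment_tKnot_two
  have mean_sq := polyAsymptotic_genusMean.mul polyAsymptotic_genusMean
  have variance_poly : (C (1 / 16) * X ^ 2 + C (5 / 48) * X - C (1 / 9) : ℝ[X]) -
      (C (1 / 4) * X + C (1 / 12)) * (C (1 / 4) * X + C (1 / 12)) =
        C (1 / 16) * X - C (17 / 144) :=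
    Polynomial.funext fun x => by
      simp only [eval_add, eval_sub, eval_mul, eval_pow, eval_C, eval_X]
      ring
  simpa only [← genusVariance_eq, variance_poly] using second_moment.sub mean_sq

/-- The variance of the genus of a uniformly random 2-bridge knot with crossing number c
approaches c/16 − 17/144 as c → ∞: the sequence Var(c) − c/16 + 17/144 tends to 0. -/
theorem genusVariance_asymptotic :
    Filter.Tendsto (fun c : ℕ => genusVariance c - (c : ℝ) / 16 + 17 / 144)
      Filter.atTop (nhds 0) := by
  refine polyAsymptotic_genusVariance.tendsto_sub.congr fun c => ?_
  simp only [eval_sub, eval_mul, eval_C, eval_X]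
  ring
end
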